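/- arXiv:funct-an/9607003 — 2 statements merged into one kernel-verified Lean document; each statement's English description precedes it below -/
import Mathlib

section
/- Let 𝔄 be a C*-algebra. Then: (i) every positive element e ∈ 𝔄 with ‖e‖ = 1 can be approximated in norm by elements of 𝔄_P; (ii) if e ∈ 𝔄 with 0 ≤ e ≤ 1 admits a nonzero positive p ∈ 𝔄 with p e = p, then p can be taken from 𝔄_P, i.e., there exists a nonzero p′ ∈ 𝔄_P with p′ e = p′. -/
open scoped ComplexOrder

/-- The set `𝔄_P`: positive elements `e` with `0 ≤ e ≤ 1` admitting a nonzero positive `p`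
with `p * e = p`. -/
def MemAP {A : Type*} [CStarAlgebra A] [PartialOrder A] [StarOrderedRing A] (e : A) : Prop :=
  0 ≤ e ∧ e ≤ 1 ∧ ∃ p : A, 0 ≤ p ∧ p ≠ 0 ∧ p * e = p

/-- If `f` takes values in `[0, 1]` on `[0, ∞)` and equals `1` on `[r, ∞)` for some `r < ‖a‖`,
then `cfc f a ∈ 𝔄_P`. -/
theorem memAP_cfc {A : Type*} [CStarAlgebra A] [PartialOrder A] [StarOrderedRing A]
    {a : A} (ha : 0 ≤ a) {r : ℝ} (hr : r < ‖a‖) (hnorm : ‖a‖ ≠ 0) {f : ℝ → ℝ}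
    (hf : ContinuousOn f (spectrum ℝ a)) (hf₀ : ∀ t, 0 ≤ t → 0 ≤ f t)
    (hf₁ : ∀ t, 0 ≤ t → f t ≤ 1) (hfr : ∀ t, r ≤ t → f t = 1) : MemAP (cfc f a) := by
  have hspec : ∀ t ∈ spectrum ℝ a, 0 ≤ t := fun t ht ↦ spectrum_nonneg_of_nonneg ha ht
  have : Nontrivial A := ⟨a, 0, norm_ne_zero_iff.mp hnorm⟩
  have hg : ContinuousOn (fun t : ℝ ↦ max 0 (t - r)) (spectrum ℝ a) := by fun_prop
  refine ⟨cfc_nonneg fun t ht ↦ hf₀ t (hspec t ht), cfc_le_one f a fun t ht ↦ hf₁ t (hspec t ht),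
    cfc (fun t ↦ max 0 (t - r)) a, cfc_nonneg fun t _ ↦ le_max_left _ _, fun h ↦ ?_, ?_⟩
  · have h' := norm_apply_le_norm_cfc (fun t : ℝ ↦ max 0 (t - r)) a
      (CStarAlgebra.norm_mem_spectrum_of_nonneg ha) hg
    rw [h, norm_zero, norm_le_zero_iff] at h'
    have := le_max_right 0 (‖a‖ - r)
    linarith
  · rw [← cfc_mul _ f a hg hf]
    refine cfc_congr fun t _ ↦ ?_
    rcases le_total r t with h | h
    · simp [hfr t h]
    · simp [max_eq_left (sub_nonpos.mpr h)]

/-- Basic properties of `𝔄_P`: (i) every positive norm-one element is norm-approximated by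
elements of `𝔄_P`; (ii) the element `p` witnessing membership of `e` in `𝔄_P` can itself be
taken from `𝔄_P`. -/
theorem memAP_approximation_and_witness
    {A : Type*} [CStarAlgebra A] [PartialOrder A] [StarOrderedRing A] :
    (∀ e : A, 0 ≤ e → ‖e‖ = 1 → ∀ ε : ℝ, 0 < ε → ∃ e' : A, MemAP e' ∧ ‖e - e'‖ < ε) ∧
    (∀ e : A, 0 ≤ e → e ≤ 1 → (∃ p : A, 0 ≤ p ∧ p ≠ 0 ∧ p * e = p) →
      ∃ p' : A, MemAP p' ∧ p' ≠ 0 ∧ p' * e = p') := by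
  refine ⟨fun e he hnorm ε hε ↦ ?_, fun e _ _ ⟨p, hp, hp₀, hpe⟩ ↦ ?_⟩
  · have : Nontrivial A := ⟨e, 0, fun h ↦ by simp [h] at hnorm⟩
    have hcont : ContinuousOn (fun t : ℝ ↦ min 1 (t + ε / 2)) (spectrum ℝ e) := by fun_prop
    refine ⟨cfc (fun t : ℝ ↦ min 1 (t + ε / 2)) e,
      memAP_cfc he (r := 1 - ε / 2) (by linarith) (by simp [hnorm]) hcont
        (fun t ht ↦ le_min zero_le_one (by linarith)) (fun t _ ↦ min_le_left _ _)
        (fun t ht ↦ min_eq_left (by linarith)), ?_⟩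
    have hsub : e - cfc (fun t : ℝ ↦ min 1 (t + ε / 2)) e
        = cfc (fun t : ℝ ↦ t - min 1 (t + ε / 2)) e := by
      rw [cfc_sub (fun t : ℝ ↦ t) _ e, cfc_id' ℝ e]
    rw [hsub]
    refine (norm_cfc_le (c := ε / 2) (by positivity) fun t ht ↦ ?_).trans_lt (by linarith)
    have ht₁ : t ≤ 1 := by
      have h := spectrum.norm_le_norm_of_mem ht
      rw [hnorm] at h
      exact (le_abs_self t).trans h
    rw [Real.norm_eq_abs, abs_le]
    constructor
    · linarith [min_le_right 1 (t + ε / 2)]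
    · linarith [le_min ht₁ (by linarith : t ≤ t + ε / 2)]
  · have hpos : 0 < ‖p‖ := norm_pos_iff.mpr hp₀
    have hr : 0 < ‖p‖ / 2 := by positivity
    have hmax : ∀ t : ℝ, 0 < max t (‖p‖ / 2) := fun t ↦ lt_max_of_lt_right hr
    have hk : ContinuousOn (fun t : ℝ ↦ (max t (‖p‖ / 2))⁻¹) (spectrum ℝ p) :=
      (Continuous.inv₀ (by fun_prop) fun t ↦ (hmax t).ne').continuousOn
    have hmem : MemAP (cfc (fun t : ℝ ↦ (max t (‖p‖ / 2))⁻¹ * t) p) := by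
      refine memAP_cfc hp (r := ‖p‖ / 2) (by linarith) hpos.ne' (hk.mul continuousOn_id)
        (fun t ht ↦ mul_nonneg (inv_nonneg.mpr (hmax t).le) ht) (fun t _ ↦ ?_) (fun t ht ↦ ?_)
      · rw [inv_mul_le_one₀ (hmax t)]
        exact le_max_left _ _
      · rw [max_eq_left ht, inv_mul_cancel₀ (hr.trans_le ht).ne']
    refine ⟨_, hmem, fun h ↦ ?_, ?_⟩
    · obtain ⟨_, _, q, _, hq₀, hq⟩ := hmem
      exact hq₀ (by rw [← hq, h, mul_zero])
    · rw [cfc_mul _ (fun t : ℝ ↦ t) p hk, cfc_id' ℝ p, mul_assoc, hpe]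
end

section
/- Let 𝔄 = ⊗_{n=1}^∞ M₂ be the UHF algebra of type 2^∞ and let α = ⊗_{n=1}^∞ Ad diag(1, e^{2πiθ_n}), where the irrational numbers θ_n are rationally independent. Then the fixed point algebra of α equals the maximal abelian diagonal subalgebra ⊗_{n=1}^∞ ℂ², the extremal α-invariant states are exactly the pure product states x ↦ Tr(x ⊗_{n=1}^∞ diag(ρ_n, 1 − ρ_n)) with ρ_n ∈ {0,1}, and consequently every extremal α-invariant state is pure and the set of α-invariant pure states is weak*-closed in the set of α-invariant states (in particular it is not weak*-dense). -/
open scoped ComplexOrder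

/-- A state on a C*-algebra: a positive linear functional of norm one. -/
def IsState {A : Type*} [CStarAlgebra A] (φ : A →L[ℂ] ℂ) : Prop :=
  (∀ x : A, 0 ≤ φ (star x * x)) ∧ ‖φ‖ = 1

/-- A pure state: an extreme point of the state space. -/
def IsPureState {A : Type*} [CStarAlgebra A] (φ : A →L[ℂ] ℂ) : Prop :=
  IsState φ ∧ ∀ (ψ₁ ψ₂ : A →L[ℂ] ℂ) (t : ℝ), IsState ψ₁ → IsState ψ₂ →
    0 < t → t < 1 → φ = t • ψ₁ + (1 - t) • ψ₂ → ψ₁ = φ ∧ ψ₂ = φ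

/-- `u` is an extreme point of the convex set `S`. -/
def ExtremeIn {F : Type*} [AddCommGroup F] [Module ℝ F] (S : Set F) (u : F) : Prop :=
  u ∈ S ∧ ∀ v ∈ S, ∀ w ∈ S, ∀ t : ℝ, 0 < t → t < 1 → u = t • v + (1 - t) • w → v = u ∧ w = u

/-- The matrix algebra `M₂^{⊗ n}`, realized as matrices indexed by words in `Fin n → Fin 2`. -/
abbrev M2pow (n : ℕ) := Matrix (Fin n → Fin 2) (Fin n → Fin 2) ℂ

/-- The unital embedding `M₂^{⊗ n} → M₂^{⊗ (n+1)}`, `x ↦ x ⊗ 1`. -/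
noncomputable def m2Embed (n : ℕ) (x : M2pow n) : M2pow (n + 1) :=
  Matrix.of fun s t =>
    (if s (Fin.last n) = t (Fin.last n) then (1 : ℂ) else 0) *
      x (fun k => s k.castSucc) (fun k => t k.castSucc)

/-- A model of the UHF algebra `⊗_{n=1}^∞ M₂` of type `2^∞`: a C*-algebra together with
compatible unital embeddings of the matrix algebras `M₂^{⊗ n}` with dense union. -/
structure UHF2Model (A : Type*) [CStarAlgebra A] where
  j : ∀ n : ℕ, M2pow n →⋆ₐ[ℂ] A
  inj : ∀ n, Function.Injective (j n)
  compat : ∀ n (x : M2pow n), j (n + 1) (m2Embed n x) = j n x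
  dense : Dense (⋃ n, Set.range (j n))

/-- The diagonal unitary `⊗_{k<n} diag(1, e^{2πiθ_k})` in `M₂^{⊗ n}`. -/
noncomputable def diagUnitary (θ : ℕ → ℝ) (n : ℕ) : M2pow n :=
  Matrix.diagonal fun s => Complex.exp
    (2 * Real.pi * Complex.I * ∑ k : Fin n, ((s k : ℕ) : ℂ) * ((θ (k : ℕ) : ℝ) : ℂ))

section PositiveFunctional

variable {A : Type*} [CStarAlgebra A] {φ : A →L[ℂ] ℂ}

lemma exists_positiveLinearMap_of_star_mul_self (hφ : ∀ x : A, 0 ≤ φ (star x * x)) :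
    letI := CStarAlgebra.spectralOrder A
    ∃ f : A →ₚ[ℂ] ℂ, ∀ x, f x = φ x := by
  let _ := CStarAlgebra.spectralOrder A
  let _ := CStarAlgebra.spectralOrderedRing A
  refine ⟨PositiveLinearMap.mk₀ (φ : A →ₗ[ℂ] ℂ) fun x hx => ?_, fun x => rfl⟩
  obtain ⟨y, rfl⟩ := CStarAlgebra.nonneg_iff_eq_star_mul_self.mp hx
  exact hφ y

lemma norm_map_star_mul_sq_le (hφ : ∀ x : A, 0 ≤ φ (star x * x)) (x y : A) :
    ‖φ (star x * y)‖ ^ 2 ≤ (φ (star x * x)).re * (φ (star y * y)).re := by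
  let _ := CStarAlgebra.spectralOrder A
  let _ := CStarAlgebra.spectralOrderedRing A
  obtain ⟨f, hf⟩ := exists_positiveLinearMap_of_star_mul_self hφ
  have h := inner_mul_inner_self_le (𝕜 := ℂ) (f.toPreGNS x) (f.toPreGNS y)
  rw [norm_inner_symm (f.toPreGNS y), ← sq] at h
  simp only [PositiveLinearMap.preGNS_inner_def, PositiveLinearMap.ofPreGNS_toPreGNS, hf] at h
  exact h

lemma norm_map_sq_le (hφ : ∀ x : A, 0 ≤ φ (star x * x)) (x : A) :
    ‖φ x‖ ^ 2 ≤ (φ 1).re * (φ (star x * x)).re := by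
  simpa using norm_map_star_mul_sq_le hφ 1 x

lemma map_one_re_nonneg (hφ : ∀ x : A, 0 ≤ φ (star x * x)) : 0 ≤ (φ 1).re := by
  simpa using (Complex.nonneg_iff.mp (hφ 1)).1

lemma norm_map_le_map_one_mul_norm (hφ : ∀ x : A, 0 ≤ φ (star x * x)) (x : A) :
    ‖φ x‖ ≤ (φ 1).re * ‖x‖ := by
  let _ := CStarAlgebra.spectralOrder A
  let _ := CStarAlgebra.spectralOrderedRing A
  obtain ⟨f, hf⟩ := exists_positiveLinearMap_of_star_mul_self hφ
  have h1 : (φ (star x * x)).re ≤ (φ 1).re * ‖x‖ ^ 2 := by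
    have h := OrderHomClass.mono f (CStarAlgebra.star_mul_le_algebraMap_norm_sq (a := x))
    rw [Algebra.algebraMap_eq_smul_one, ← Complex.coe_smul, map_smul, hf, hf] at h
    have := (Complex.le_def.mp h).1
    rw [smul_eq_mul, Complex.re_ofReal_mul] at this
    linarith
  have h0 := map_one_re_nonneg hφ
  refine le_of_sq_le_sq ?_ (by positivity)
  calc ‖φ x‖ ^ 2 ≤ (φ 1).re * (φ (star x * x)).re := norm_map_sq_le hφ x
    _ ≤ (φ 1).re * ((φ 1).re * ‖x‖ ^ 2) := by gcongr
    _ = _ := by ring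

lemma isState_iff_map_one [Nontrivial A] :
    IsState φ ↔ (∀ x : A, 0 ≤ φ (star x * x)) ∧ φ 1 = 1 := by
  refine and_congr_right fun hφ => ⟨fun h => ?_, fun h => ?_⟩
  · have h1 : 1 ≤ (φ 1).re :=
      h ▸ φ.opNorm_le_bound (map_one_re_nonneg hφ) (norm_map_le_map_one_mul_norm hφ)
    have h2 : (φ 1).re ≤ 1 := by
      calc (φ 1).re ≤ ‖φ 1‖ := Complex.re_le_norm _
        _ ≤ ‖φ‖ * ‖(1 : A)‖ := φ.le_opNorm 1
        _ = 1 := by rw [h, norm_one, mul_one]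
    have h3 : 0 ≤ φ 1 := by simpa using hφ 1
    exact Complex.ext (le_antisymm h2 h1) (Complex.nonneg_iff.mp h3).2.symm
  · refine le_antisymm (φ.opNorm_le_bound zero_le_one fun x => ?_) ?_
    · simpa [h] using norm_map_le_map_one_mul_norm hφ x
    · simpa [h] using φ.le_opNorm 1

lemma IsState.map_one [Nontrivial A] (hφ : IsState φ) : φ 1 = 1 :=
  (isState_iff_map_one.mp hφ).2

lemma IsState.convex [Nontrivial A] {ψ : A →L[ℂ] ℂ} (hφ : IsState φ) (hψ : IsState ψ) {t : ℝ}
    (h0 : 0 ≤ t) (h1 : t ≤ 1) : IsState (t • φ + (1 - t) • ψ) := by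
  refine isState_iff_map_one.mpr ⟨fun x => ?_, ?_⟩
  · have hs : (0 : ℂ) ≤ ((1 - t : ℝ) : ℂ) := by exact_mod_cast sub_nonneg.mpr h1
    have ht : (0 : ℂ) ≤ (t : ℂ) := by exact_mod_cast h0
    simpa only [add_apply, smul_apply,
      Complex.real_smul] using
      add_nonneg (mul_nonneg ht (hφ.1 x)) (mul_nonneg hs (hψ.1 x))
  · simp [hφ.map_one, hψ.map_one]

lemma map_nonneg_of_isStarProjection (hφ : ∀ x : A, 0 ≤ φ (star x * x)) {p : A}
    (hp : IsStarProjection p) : 0 ≤ φ p := by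
  have := hφ p
  rwa [hp.isSelfAdjoint.star_eq, hp.isIdempotentElem.eq] at this

lemma IsState.map_re_le_one [Nontrivial A] (hφ : IsState φ) {p : A} (hp : IsStarProjection p) :
    (φ p).re ≤ 1 := by
  have := (Complex.nonneg_iff.mp (map_nonneg_of_isStarProjection hφ.1 hp.one_sub)).1
  rw [map_sub, hφ.map_one, Complex.sub_re, Complex.one_re] at this
  linarith

/-- The normalized compression of a positive functional by a projection. -/
noncomputable def compression (φ : A →L[ℂ] ℂ) (p : A) : A →L[ℂ] ℂ :=
  (φ p).re⁻¹ • φ.comp (ContinuousLinearMap.mulLeftRight ℂ A p p)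

lemma compression_apply (φ : A →L[ℂ] ℂ) (p x : A) :
    compression φ p x = ((φ p).re : ℂ)⁻¹ * φ (p * x * p) := by
  simp [compression]

lemma isState_compression [Nontrivial A] (hφ : ∀ x : A, 0 ≤ φ (star x * x)) {p : A}
    (hp : IsStarProjection p) (h : (φ p).re ≠ 0) : IsState (compression φ p) := by
  have h0 := Complex.nonneg_iff.mp (map_nonneg_of_isStarProjection hφ hp)
  refine isState_iff_map_one.mpr ⟨fun x => ?_, ?_⟩
  · have hx := hφ (x * p)
    rw [star_mul, hp.isSelfAdjoint.star_eq] at hx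
    have hr : (0 : ℂ) ≤ ((φ p).re : ℂ)⁻¹ := by
      rw [← Complex.ofReal_inv]
      exact_mod_cast inv_nonneg.mpr h0.1
    rw [compression_apply]
    simpa only [mul_assoc] using mul_nonneg hr hx
  · have hc : ((φ p).re : ℂ) = φ p := Complex.ext rfl h0.2
    rw [compression_apply, mul_one, hp.isIdempotentElem.eq, hc, inv_mul_cancel₀]
    rw [← hc]
    exact_mod_cast h

/-- A state which is one on a projection is supported there. -/
lemma IsState.map_compress [Nontrivial A] (hφ : IsState φ) {p : A} (hp : IsStarProjection p)
    (h : φ p = 1) (x : A) : φ (p * x * p) = φ x := by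
  have hz : φ (1 - p) = 0 := by rw [map_sub, hφ.map_one, h, sub_self]
  have hq := hp.one_sub
  have hl (y : A) : φ ((1 - p) * y) = 0 := by
    have := norm_map_star_mul_sq_le hφ.1 (1 - p) y
    rw [hq.isSelfAdjoint.star_eq, hq.isIdempotentElem.eq, hz] at this
    simpa using this
  have hr (y : A) : φ (y * (1 - p)) = 0 := by
    have := norm_map_star_mul_sq_le hφ.1 (star y) (1 - p)
    rw [hq.isSelfAdjoint.star_eq, hq.isIdempotentElem.eq, hz, star_star] at this
    simpa using this
  have e : x = p * x * p + p * (x * (1 - p)) + (1 - p) * x := by noncomm_ring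
  have hr' := hr (p * x)
  conv_rhs => rw [e, map_add, map_add, hl, ← mul_assoc, hr']
  simp

end PositiveFunctional

section Matrices

lemma m2Embed_apply_self {n : ℕ} (x : M2pow n) (s : Fin (n + 1) → Fin 2) :
    m2Embed n x s s = x (fun k => s k.castSucc) (fun k => s k.castSucc) := by
  simp [m2Embed]

lemma isDiag_m2Embed {n : ℕ} {x : M2pow n} (hx : x.IsDiag) : (m2Embed n x).IsDiag := by
  intro s t hst
  simp only [m2Embed, Matrix.of_apply]
  split_ifs with h
  · rw [hx, mul_zero]
    intro he
    refine hst (funext fun k => ?_)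
    induction k using Fin.lastCases with
    | last => exact h
    | cast k => exact congrFun he k
  · rw [zero_mul]

lemma exists_eq_diagonal_iff_isDiag {n : Type*} [DecidableEq n] {x : Matrix n n ℂ} :
    (∃ d, x = Matrix.diagonal d) ↔ x.IsDiag :=
  ⟨by rintro ⟨d, rfl⟩; exact Matrix.isDiag_diagonal d, fun h => ⟨_, h.diagonal_diag.symm⟩⟩

lemma isDiag_single {n : Type*} [DecidableEq n] (s : n) (c : ℂ) :
    (Matrix.single s s c).IsDiag := by
  intro u v huv
  rw [Matrix.single_apply, if_neg]
  rintro ⟨rfl, rfl⟩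
  exact huv rfl

lemma isStarProjection_single {n : Type*} [Fintype n] [DecidableEq n] (s : n) :
    IsStarProjection (Matrix.single s s (1 : ℂ)) :=
  ⟨by simp [IsIdempotentElem], by
    simp [IsSelfAdjoint, Matrix.star_eq_conjTranspose]⟩

end Matrices

namespace UHF2Model

variable {A : Type*} [CStarAlgebra A] (M : UHF2Model A)

include M in
lemma nontrivial : Nontrivial A := (M.inj 0).nontrivial

/-- The minimal diagonal projection of `M₂^{⊗ n}` labelled by the word `s`. -/
noncomputable def cylinder (n : ℕ) (s : Fin n → Fin 2) : A := M.j n (Matrix.single s s 1)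

lemma isStarProjection_cylinder (n : ℕ) (s : Fin n → Fin 2) :
    IsStarProjection (M.cylinder n s) :=
  (isStarProjection_single s).map (M.j n)

lemma sum_cylinder (n : ℕ) : ∑ s, M.cylinder n s = 1 := by
  simp only [cylinder]
  rw [← map_sum, Matrix.sum_single_eq_diagonal, Matrix.diagonal_one, map_one]

lemma cylinder_mul_mul_cylinder (n : ℕ) (s : Fin n → Fin 2) (x : M2pow n) :
    M.cylinder n s * M.j n x * M.cylinder n s = x s s • M.cylinder n s := by
  simp only [cylinder]
  rw [← map_mul, ← map_mul, Matrix.single_mul_mul_single, ← map_smul, Matrix.smul_single]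
  simp

lemma exists_j_eq_of_le {m n : ℕ} (h : m ≤ n) (x : M2pow m) :
    ∃ y : M2pow n, M.j n y = M.j m x ∧ (x.IsDiag → y.IsDiag) ∧
      ∀ ρ : ℕ → Fin 2, y (fun k => ρ k) (fun k => ρ k) = x (fun k => ρ k) (fun k => ρ k) := by
  induction n, h using Nat.le_induction with
  | base => exact ⟨x, rfl, id, fun _ => rfl⟩
  | succ n _ ih =>
    obtain ⟨y, hy, hd, hr⟩ := ih
    exact ⟨m2Embed n y, by rw [M.compat, hy], fun hx => isDiag_m2Embed (hd hx),
      fun ρ => (m2Embed_apply_self y _).trans (hr ρ)⟩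

/-- A closed property holding on all large matrix subalgebras holds everywhere. -/
lemma induction_of_isClosed {P : A → Prop} (hP : IsClosed {a | P a}) (N : ℕ)
    (h : ∀ n, N ≤ n → ∀ x, P (M.j n x)) (a : A) : P a := by
  have hsub : (⋃ n, Set.range (M.j n)) ⊆ {a | P a} := by
    rintro _ ⟨_, ⟨n, rfl⟩, x, rfl⟩
    obtain ⟨y, hy, -⟩ := M.exists_j_eq_of_le (le_max_left n N) x
    rw [← hy]
    exact h _ (le_max_right n N) y
  exact hP.closure_subset_iff.mpr hsub (M.dense a)

/-- `φ` is the product functional given by evaluation at the diagonal entry of the word `ρ`. -/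
def IsEvaluation (φ : A →L[ℂ] ℂ) (ρ : ℕ → Fin 2) : Prop :=
  ∀ n (x : M2pow n), φ (M.j n x) = x (fun k => ρ (k : ℕ)) (fun k => ρ (k : ℕ))

variable {M} {φ ψ : A →L[ℂ] ℂ} {ρ : ℕ → Fin 2}

lemma IsEvaluation.unique (hφ : M.IsEvaluation φ ρ) (hψ : M.IsEvaluation ψ ρ) : φ = ψ :=
  ContinuousLinearMap.ext <| M.induction_of_isClosed (isClosed_eq φ.continuous ψ.continuous) 0
    fun n _ x => (hφ n x).trans (hψ n x).symm

lemma IsEvaluation.map_cylinder (hφ : M.IsEvaluation φ ρ) (n : ℕ) :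
    φ (M.cylinder n fun k => ρ k) = 1 := by
  rw [cylinder, hφ, Matrix.single_apply_same]

lemma IsEvaluation.map_cylinder_eq_zero_or_one (hφ : M.IsEvaluation φ ρ) (n : ℕ)
    (s : Fin n → Fin 2) : φ (M.cylinder n s) = 0 ∨ φ (M.cylinder n s) = 1 := by
  rw [cylinder, hφ, Matrix.single_apply]
  split_ifs <;> simp

lemma IsEvaluation.isState (hφ : M.IsEvaluation φ ρ) : IsState φ := by
  have := M.nontrivial
  refine isState_iff_map_one.mpr ⟨M.induction_of_isClosed ?_ 0 fun n _ x => ?_, ?_⟩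
  · exact isClosed_le continuous_const (by fun_prop)
  · rw [← map_star, ← map_mul, hφ, Matrix.star_eq_conjTranspose, Matrix.mul_apply]
    exact Finset.sum_nonneg fun i _ => star_mul_self_nonneg (x i _)
  · rw [← map_one (M.j 0), hφ, Matrix.one_apply_eq]

lemma map_j_of_map_cylinder_eq_one (hφ : IsState φ) {n : ℕ} {s : Fin n → Fin 2}
    (h : φ (M.cylinder n s) = 1) (x : M2pow n) : φ (M.j n x) = x s s := by
  have := M.nontrivial
  rw [← hφ.map_compress (M.isStarProjection_cylinder n s) h, cylinder_mul_mul_cylinder, map_smul,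
    h, smul_eq_mul, mul_one]

lemma IsEvaluation.isPureState (hφ : M.IsEvaluation φ ρ) : IsPureState φ := by
  have := M.nontrivial
  refine ⟨hφ.isState, fun ψ₁ ψ₂ t h₁ h₂ ht ht' he => ?_⟩
  have key (n : ℕ) : ψ₁ (M.cylinder n fun k => ρ k) = 1 ∧
      ψ₂ (M.cylinder n fun k => ρ k) = 1 := by
    have hp := M.isStarProjection_cylinder n fun k => ρ k
    have e := hφ.map_cylinder n
    rw [he] at e
    have e' := congrArg Complex.re e
    simp only [add_apply, smul_apply, Complex.real_smul, Complex.add_re, Complex.re_ofReal_mul,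
      Complex.one_re] at e'
    have b₁ := h₁.map_re_le_one hp
    have b₂ := h₂.map_re_le_one hp
    have i₁ := (Complex.nonneg_iff.mp (map_nonneg_of_isStarProjection h₁.1 hp)).2
    have i₂ := (Complex.nonneg_iff.mp (map_nonneg_of_isStarProjection h₂.1 hp)).2
    exact ⟨Complex.ext (by rw [Complex.one_re]; nlinarith) i₁.symm,
      Complex.ext (by rw [Complex.one_re]; nlinarith) i₂.symm⟩
  exact ⟨IsEvaluation.unique (fun n => map_j_of_map_cylinder_eq_one h₁ (key n).1) hφ,
    IsEvaluation.unique (fun n => map_j_of_map_cylinder_eq_one h₂ (key n).2) hφ⟩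

lemma exists_isEvaluation_of_map_cylinder (hφ : IsState φ)
    (h : ∀ n s, φ (M.cylinder n s) = 0 ∨ φ (M.cylinder n s) = 1) :
    ∃ ρ, M.IsEvaluation φ ρ := by
  have := M.nontrivial
  have hex (n : ℕ) : ∃ s, φ (M.cylinder n s) = 1 := by
    by_contra! hne
    have h1 := hφ.map_one
    rw [← M.sum_cylinder n, map_sum,
      Finset.sum_eq_zero fun s _ => (h n s).resolve_right (hne s)] at h1
    exact zero_ne_one h1
  choose s hs using hex
  have hcompat (n : ℕ) : (fun k : Fin n => s (n + 1) k.castSucc) = s n := by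
    have h1 := hs n
    rw [cylinder, ← M.compat, map_j_of_map_cylinder_eq_one hφ (hs (n + 1)), m2Embed_apply_self,
      Matrix.single_apply] at h1
    by_contra hne
    simp [Ne.symm hne] at h1
  let ρ : ℕ → Fin 2 := fun k => s (k + 1) (Fin.last k)
  have hρ (n : ℕ) : s n = fun k : Fin n => ρ k := by
    induction n with
    | zero => exact Subsingleton.elim _ _
    | succ n ih =>
      funext k
      induction k using Fin.lastCases with
      | last => rfl
      | cast k => exact (congrFun (hcompat n) k).trans (congrFun ih k)
  refine ⟨ρ, fun n x => ?_⟩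
  rw [map_j_of_map_cylinder_eq_one hφ (hs n), hρ]

variable (M) in
lemma exists_isEvaluation (ρ : ℕ → Fin 2) : ∃ φ, M.IsEvaluation φ ρ := by
  have := M.nontrivial
  let p (n : ℕ) : A := M.cylinder n fun k => ρ k
  have hp (n : ℕ) : IsStarProjection (p n) := M.isStarProjection_cylinder n _
  have hp0 (n : ℕ) : ‖p n‖ ≠ 0 := by
    refine norm_ne_zero_iff.mpr fun h => ?_
    have := M.inj n (h.trans (map_zero _).symm)
    simpa using congrFun (congrFun this fun k => ρ k) fun k => ρ k
  have hple (n : ℕ) : ‖p n‖ = 1 := by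
    have := CStarRing.norm_star_mul_self (x := p n)
    rw [(hp n).isSelfAdjoint.star_eq, (hp n).isIdempotentElem.eq] at this
    exact (mul_eq_left₀ (hp0 n)).mp this.symm
  choose g hg hgp using fun n => exists_dual_vector ℂ (p n) (hp0 n)
  let f (n : ℕ) : WeakDual ℂ A :=
    StrongDual.toWeakDual ((g n).comp (ContinuousLinearMap.mulLeftRight ℂ A (p n) (p n)))
  have hf (n : ℕ) (a : A) : f n a = g n (p n * a * p n) := rfl
  have hfj {m n : ℕ} (h : m ≤ n) (x : M2pow m) :
      f n (M.j m x) = x (fun k => ρ k) (fun k => ρ k) := by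
    obtain ⟨y, hy, -, hr⟩ := M.exists_j_eq_of_le h x
    rw [hf, ← hy, cylinder_mul_mul_cylinder, map_smul, hgp, hple, hr]
    simp
  have hball (n : ℕ) : f n ∈ WeakDual.toStrongDual ⁻¹' Metric.closedBall (0 : StrongDual ℂ A) 1 := by
    rw [Set.mem_preimage, mem_closedBall_zero_iff]
    refine ContinuousLinearMap.opNorm_le_bound _ zero_le_one fun a => ?_
    calc ‖g n (p n * a * p n)‖ ≤ ‖g n‖ * ‖p n * a * p n‖ := (g n).le_opNorm _
      _ ≤ ‖g n‖ * (‖p n‖ * ‖a‖ * ‖p n‖) := by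
        gcongr
        exact (norm_mul_le _ _).trans (by gcongr; exact norm_mul_le _ _)
      _ = 1 * ‖a‖ := by rw [hg, hple]; ring
  obtain ⟨φ, -, hφ⟩ := (WeakDual.isCompact_closedBall (0 : StrongDual ℂ A) 1).ultrafilter_le_nhds
    ((Filter.hyperfilter ℕ).map f)
    (Filter.le_principal_iff.mpr (Filter.mem_map.mpr (Filter.univ_mem' hball)))
  refine ⟨WeakDual.toStrongDual φ, fun m x => ?_⟩
  have hlim : Filter.Tendsto (fun n => f n (M.j m x)) (Filter.hyperfilter ℕ) (nhds (φ (M.j m x))) :=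
    ((WeakDual.eval_continuous (M.j m x)).tendsto φ).comp hφ
  refine tendsto_nhds_unique hlim (tendsto_const_nhds.congr' ?_)
  refine Filter.Eventually.filter_mono Nat.hyperfilter_le_atTop ?_
  filter_upwards [Filter.eventually_ge_atTop m] with n hn
  exact (hfj hn x).symm

end UHF2Model

section Phase

/-- The diagonal entry of `diagUnitary θ n` at the word `s`. -/
noncomputable def phase (θ : ℕ → ℝ) {n : ℕ} (s : Fin n → Fin 2) : ℂ :=
  Complex.exp (2 * Real.pi * Complex.I * ∑ k : Fin n, ((s k : ℕ) : ℂ) * ((θ (k : ℕ) : ℝ) : ℂ))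

lemma phase_eq_exp_ofReal_mul_I (θ : ℕ → ℝ) {n : ℕ} (s : Fin n → Fin 2) :
    phase θ s = Complex.exp ((2 * Real.pi * ∑ k : Fin n, (s k : ℕ) * θ k : ℝ) * Complex.I) := by
  rw [phase]
  push_cast
  ring_nf

lemma norm_phase (θ : ℕ → ℝ) {n : ℕ} (s : Fin n → Fin 2) : ‖phase θ s‖ = 1 := by
  rw [phase_eq_exp_ofReal_mul_I, Complex.norm_exp_ofReal_mul_I]

lemma phase_mul_star_self (θ : ℕ → ℝ) {n : ℕ} (s : Fin n → Fin 2) :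
    phase θ s * star (phase θ s) = 1 := by
  rw [Complex.star_def, Complex.mul_conj, Complex.normSq_eq_norm_sq, norm_phase]
  simp

lemma phase_injective {θ : ℕ → ℝ}
    (hθ : LinearIndependent ℚ (fun o : Option ℕ => Option.elim o (1 : ℝ) θ)) (n : ℕ) :
    Function.Injective (phase θ (n := n)) := by
  intro s t hst
  rw [phase, phase, Complex.exp_eq_exp_iff_exists_int] at hst
  obtain ⟨m, hm⟩ := hst
  have hpi : (2 * Real.pi * Complex.I : ℂ) ≠ 0 := Complex.two_pi_I_ne_zero
  have hC : ∑ k : Fin n, ((s k : ℕ) : ℂ) * ((θ (k : ℕ) : ℝ) : ℂ) =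
      ∑ k : Fin n, ((t k : ℕ) : ℂ) * ((θ (k : ℕ) : ℝ) : ℂ) + m := by
    apply mul_left_cancel₀ hpi
    rw [hm]
    ring
  have hR : ∑ k : Fin n, ((s k : ℕ) : ℝ) * θ k = ∑ k : Fin n, ((t k : ℕ) : ℝ) * θ k + m := by
    exact_mod_cast hC
  let g : Option ℕ → ℚ := fun o => o.elim (-m) fun k =>
    if h : k < n then ((s ⟨k, h⟩ : ℕ) : ℚ) - ((t ⟨k, h⟩ : ℕ) : ℚ) else 0
  have hg := linearIndependent_iff'.mp hθ (Finset.insertNone (Finset.range n)) g (by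
    rw [Finset.sum_insertNone, Finset.sum_range]
    simp only [g, Option.elim, Fin.is_lt, dite_true, Fin.eta, Rat.smul_def]
    push_cast
    simp only [sub_mul, Finset.sum_sub_distrib, hR]
    ring)
  funext k
  have hk := hg (some k) (by simp)
  simp only [g, Option.elim, Fin.is_lt, dite_true, Fin.eta, sub_eq_zero] at hk
  exact Fin.ext (by exact_mod_cast hk)

lemma phase_mul_star_ne_one {θ : ℕ → ℝ}
    (hθ : LinearIndependent ℚ (fun o : Option ℕ => Option.elim o (1 : ℝ) θ)) {n : ℕ}
    {s t : Fin n → Fin 2} (hst : s ≠ t) : phase θ s * star (phase θ t) ≠ 1 := by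
  intro h
  refine hst (phase_injective hθ n ?_)
  calc phase θ s = phase θ s * star (phase θ t) * phase θ t := by
        rw [mul_assoc, mul_comm (star _), phase_mul_star_self, mul_one]
    _ = phase θ t := by rw [h, one_mul]

lemma diagUnitary_mul_mul_star_apply (θ : ℕ → ℝ) {n : ℕ} (x : M2pow n) (s t : Fin n → Fin 2) :
    (diagUnitary θ n * x * star (diagUnitary θ n)) s t =
      phase θ s * star (phase θ t) * x s t := by
  rw [Matrix.star_eq_conjTranspose, diagUnitary, Matrix.diagonal_conjTranspose,
    Matrix.mul_diagonal, Matrix.diagonal_mul]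
  simp only [phase, Pi.star_apply]
  ring

/-- Cesàro means of the powers of a nontrivial phase vanish in the limit. -/
lemma tendsto_cesaro_pow {z : ℂ} (hz : ‖z‖ = 1) (hz1 : z ≠ 1) :
    Filter.Tendsto (fun N : ℕ => (N : ℂ)⁻¹ * ∑ k ∈ Finset.range N, z ^ k) Filter.atTop
      (nhds 0) := by
  have hb : ∀ N : ℕ, ‖∑ k ∈ Finset.range N, z ^ k‖ ≤ 2 / ‖z - 1‖ := fun N => by
    rw [geom_sum_eq hz1, norm_div]
    gcongr
    calc ‖z ^ N - 1‖ ≤ ‖z ^ N‖ + ‖(1 : ℂ)‖ := norm_sub_le _ _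
      _ = 2 := by rw [norm_pow, hz, one_pow, norm_one]; norm_num
  refine Filter.Tendsto.zero_mul_isBoundedUnder_le tendsto_inv_atTop_nhds_zero_nat ?_
  exact Filter.isBoundedUnder_of ⟨_, hb⟩

end Phase

lemma continuous_starAlgEquiv {A : Type*} [CStarAlgebra A] (α : A ≃⋆ₐ[ℂ] A) : Continuous α :=
  (StarAlgEquiv.isometry α).continuous

/-- The `α`-invariant states, as functions on the algebra with the topology of pointwise
convergence. -/
def invariantStates {A : Type*} [CStarAlgebra A] (α : A ≃⋆ₐ[ℂ] A) : Set (A → ℂ) :=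
  {f : A → ℂ | ∃ φ : A →L[ℂ] ℂ, IsState φ ∧ (∀ x, φ (α x) = φ x) ∧ f = ⇑φ}

/-- The `α`-invariant pure states, as functions on the algebra. -/
def invariantPureStates {A : Type*} [CStarAlgebra A] (α : A ≃⋆ₐ[ℂ] A) : Set (A → ℂ) :=
  {f : A → ℂ | ∃ φ : A →L[ℂ] ℂ, IsPureState φ ∧ (∀ x, φ (α x) = φ x) ∧ f = ⇑φ}

lemma IsPureState.extremeIn {A : Type*} [CStarAlgebra A] {α : A ≃⋆ₐ[ℂ] A} {φ : A →L[ℂ] ℂ}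
    (hpure : IsPureState φ) (hφ : ∀ x, φ (α x) = φ x) : ExtremeIn (invariantStates α) φ := by
  refine ⟨⟨φ, hpure.1, hφ, rfl⟩, ?_⟩
  rintro _ ⟨ψ₁, h₁, -, rfl⟩ _ ⟨ψ₂, h₂, -, rfl⟩ t ht ht' he
  obtain ⟨e₁, e₂⟩ := hpure.2 ψ₁ ψ₂ t h₁ h₂ ht ht' (DFunLike.coe_injective he)
  exact ⟨congrArg _ e₁, congrArg _ e₂⟩

namespace UHF2Model

variable {A : Type*} [CStarAlgebra A] {M : UHF2Model A} {θ : ℕ → ℝ} {α : A ≃⋆ₐ[ℂ] A}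

/-- `α` is the product action `⊗ Ad diag(1, e^{2πiθ_n})`. -/
def IsProductAction (M : UHF2Model A) (θ : ℕ → ℝ) (α : A ≃⋆ₐ[ℂ] A) : Prop :=
  ∀ n x, α (M.j n x) = M.j n (diagUnitary θ n * x * star (diagUnitary θ n))

namespace IsProductAction

variable (hα : M.IsProductAction θ α)
include hα

lemma apply_single {n : ℕ} (s t : Fin n → Fin 2) (c : ℂ) :
    α (M.j n (Matrix.single s t c)) =
      (phase θ s * star (phase θ t)) • M.j n (Matrix.single s t c) := by
  rw [hα, ← map_smul]
  congr 1
  ext u v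
  rw [diagUnitary_mul_mul_star_apply, Matrix.smul_apply, Matrix.single_apply, smul_eq_mul]
  split_ifs with h
  · rw [h.1, h.2]
  · simp

lemma iterate_single {n : ℕ} (s t : Fin n → Fin 2) (c : ℂ) (k : ℕ) :
    α^[k] (M.j n (Matrix.single s t c)) =
      (phase θ s * star (phase θ t)) ^ k • M.j n (Matrix.single s t c) := by
  induction k with
  | zero => simp
  | succ k ih =>
    rw [Function.iterate_succ_apply', ih, map_smul, hα.apply_single, smul_smul, pow_succ]

lemma apply_of_isDiag {n : ℕ} {x : M2pow n} (hx : x.IsDiag) : α (M.j n x) = M.j n x := by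
  rw [hα]
  congr 1
  ext s t
  rw [diagUnitary_mul_mul_star_apply]
  by_cases h : s = t
  · rw [h, phase_mul_star_self, one_mul]
  · rw [hx h, mul_zero]

lemma apply_cylinder (n : ℕ) (s : Fin n → Fin 2) : α (M.cylinder n s) = M.cylinder n s := by
  exact hα.apply_of_isDiag (isDiag_single s 1)

lemma map_apply_of_isEvaluation {φ : A →L[ℂ] ℂ} {ρ : ℕ → Fin 2} (hφ : M.IsEvaluation φ ρ)
    (x : A) : φ (α x) = φ x := by
  have hc : Continuous α := continuous_starAlgEquiv α
  refine M.induction_of_isClosed (isClosed_eq (φ.continuous.comp hc) φ.continuous) 0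
    (fun n _ x => ?_) x
  rw [Function.comp_apply, hα, hφ, hφ, diagUnitary_mul_mul_star_apply, phase_mul_star_self, one_mul]

variable (hθ : LinearIndependent ℚ (fun o : Option ℕ => Option.elim o (1 : ℝ) θ))
include hθ

lemma map_j_eq_zero {φ : A →L[ℂ] ℂ} (hφ : ∀ x, φ (α x) = φ x) {n : ℕ} {x : M2pow n}
    (hx : ∀ s, x s s = 0) : φ (M.j n x) = 0 := by
  rw [Matrix.matrix_eq_sum_single x, map_sum, map_sum]
  refine Finset.sum_eq_zero fun s _ => ?_
  rw [map_sum, map_sum]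
  refine Finset.sum_eq_zero fun t _ => ?_
  by_cases hst : s = t
  · rw [hst, hx, Matrix.single_zero, map_zero, map_zero]
  · have h := hφ (M.j n (Matrix.single s t (x s t)))
    rw [hα.apply_single, map_smul, smul_eq_mul] at h
    by_contra h0
    exact phase_mul_star_ne_one hθ hst ((mul_eq_right₀ h0).mp h)

lemma tendsto_cesaro (n : ℕ) (x : M2pow n) :
    Filter.Tendsto (fun N : ℕ => (N : ℂ)⁻¹ • ∑ k ∈ Finset.range N, α^[k] (M.j n x)) Filter.atTop
      (nhds (M.j n (Matrix.diagonal x.diag))) := by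
  induction x using Matrix.induction_on with
  | h_add x y hx hy =>
    have e : Matrix.diagonal (x + y).diag = Matrix.diagonal x.diag + Matrix.diagonal y.diag := by
      rw [Matrix.diag_add, Matrix.diagonal_add]
      rfl
    rw [e, map_add (M.j n) (Matrix.diagonal x.diag)]
    refine (hx.add hy).congr fun N => ?_
    simp only [map_add, iterate_map_add, Finset.sum_add_distrib, smul_add]
  | h_std_basis s t c =>
    simp only [hα.iterate_single, ← Finset.sum_smul, smul_smul]
    by_cases hst : s = t
    · subst hst
      have e : Matrix.diagonal (Matrix.single s s c).diag = Matrix.single s s c :=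
        (isDiag_single s c).diagonal_diag
      rw [e]
      refine tendsto_const_nhds.congr' ?_
      filter_upwards [Filter.eventually_ne_atTop 0] with N hN
      rw [phase_mul_star_self]
      simp [hN]
    · have e : Matrix.diagonal (Matrix.single s t c).diag = 0 := by
        rw [Matrix.diag_single_of_ne _ _ _ hst, ← Matrix.diagonal_zero]
        rfl
      rw [e, map_zero, ← zero_smul ℂ (M.j n (Matrix.single s t c))]
      refine (tendsto_cesaro_pow ?_ (phase_mul_star_ne_one hθ hst)).smul_const _
      rw [norm_mul, norm_star, norm_phase, norm_phase, one_mul]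

lemma norm_sub_j_diag_le {a : A} (ha : α a = a) {n : ℕ} (x : M2pow n) :
    ‖a - M.j n (Matrix.diagonal x.diag)‖ ≤ ‖a - M.j n x‖ := by
  refine le_of_tendsto ((hα.tendsto_cesaro hθ n x).const_sub a).norm ?_
  filter_upwards [Filter.eventually_ne_atTop 0] with N hN
  have hit (k : ℕ) : a - α^[k] (M.j n x) = α^[k] (a - M.j n x) := by
    rw [iterate_map_sub, Function.iterate_fixed ha]
  have hnorm (k : ℕ) (b : A) : ‖α^[k] b‖ = ‖b‖ := by
    induction k with
    | zero => rfl
    | succ k ih => rw [Function.iterate_succ_apply', StarAlgEquiv.norm_map, ih]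
  have e : a - (N : ℂ)⁻¹ • ∑ k ∈ Finset.range N, α^[k] (M.j n x) =
      (N : ℂ)⁻¹ • ∑ k ∈ Finset.range N, α^[k] (a - M.j n x) := by
    have hN' : (N : ℂ) ≠ 0 := Nat.cast_ne_zero.mpr hN
    simp only [← hit, Finset.sum_sub_distrib, Finset.sum_const, Finset.card_range, smul_sub]
    rw [← Nat.cast_smul_eq_nsmul ℂ, smul_smul, inv_mul_cancel₀ hN', one_smul]
  rw [e, norm_smul, norm_inv, Complex.norm_natCast]
  calc (N : ℝ)⁻¹ * ‖∑ k ∈ Finset.range N, α^[k] (a - M.j n x)‖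
      ≤ (N : ℝ)⁻¹ * ∑ k ∈ Finset.range N, ‖α^[k] (a - M.j n x)‖ := by
        gcongr
        exact norm_sum_le _ _
    _ = ‖a - M.j n x‖ := by
        have hN' : (N : ℝ) ≠ 0 := Nat.cast_ne_zero.mpr hN
        simp only [hnorm, Finset.sum_const, Finset.card_range, nsmul_eq_mul]
        field_simp

lemma fixedPoints_eq :
    {a : A | α a = a} =
      closure (⋃ n, (M.j n) '' {x : M2pow n | ∃ d, x = Matrix.diagonal d}) := by
  refine Set.Subset.antisymm (fun a ha => ?_) (closure_minimal ?_ ?_)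
  · refine Metric.mem_closure_iff.mpr fun ε hε => ?_
    obtain ⟨_, hb, hd⟩ := Metric.mem_closure_iff.mp (M.dense a) ε hε
    obtain ⟨n, x, rfl⟩ := Set.mem_iUnion.mp hb
    refine ⟨M.j n (Matrix.diagonal x.diag),
      Set.mem_iUnion.mpr ⟨n, Set.mem_image_of_mem _ ⟨_, rfl⟩⟩, ?_⟩
    rw [dist_eq_norm] at hd ⊢
    exact (hα.norm_sub_j_diag_le hθ ha x).trans_lt hd
  · refine Set.iUnion_subset fun n => ?_
    rintro _ ⟨x, hx, rfl⟩
    exact hα.apply_of_isDiag (exists_eq_diagonal_iff_isDiag.mp hx)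
  · exact isClosed_eq (continuous_starAlgEquiv α) continuous_id

/-- An invariant functional does not see the off-diagonal corners of a diagonal projection. -/
lemma map_cylinder_mul_mul_one_sub {φ : A →L[ℂ] ℂ} (hφ : ∀ x, φ (α x) = φ x) (n : ℕ)
    (s : Fin n → Fin 2) (x : A) :
    φ (M.cylinder n s * x * (1 - M.cylinder n s)) = 0 ∧
      φ ((1 - M.cylinder n s) * x * M.cylinder n s) = 0 := by
  refine M.induction_of_isClosed (P := fun x =>
    φ (M.cylinder n s * x * (1 - M.cylinder n s)) = 0 ∧
      φ ((1 - M.cylinder n s) * x * M.cylinder n s) = 0) ?_ n (fun m hm x => ?_) x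
  · exact (isClosed_eq (by fun_prop) continuous_const).inter
      (isClosed_eq (by fun_prop) continuous_const)
  · obtain ⟨y, hy, hyd, -⟩ := M.exists_j_eq_of_le hm (Matrix.single s s (1 : ℂ))
    have hpp : y * y = y := M.inj m (by
      rw [map_mul, hy]
      exact (M.isStarProjection_cylinder n s).isIdempotentElem.eq)
    obtain ⟨d, rfl⟩ := exists_eq_diagonal_iff_isDiag.mpr (hyd (isDiag_single s 1))
    have hdd (u : Fin m → Fin 2) : d u * d u = d u := by
      simpa using congrFun (congrFun hpp u) u
    have hsub : (1 : M2pow m) - Matrix.diagonal d = Matrix.diagonal fun u => 1 - d u := by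
      rw [← Matrix.diagonal_one, Matrix.diagonal_sub]
    simp only [cylinder]
    rw [← hy, ← map_one (M.j m), ← map_sub, hsub, ← map_mul, ← map_mul, ← map_mul, ← map_mul]
    constructor <;> refine hα.map_j_eq_zero hθ hφ fun u => ?_ <;>
      rw [Matrix.mul_diagonal, Matrix.diagonal_mul] <;>
      linear_combination -x u u * hdd u

lemma map_cylinder_eq_zero_or_one_of_extremeIn {φ : A →L[ℂ] ℂ} (hst : IsState φ)
    (hφ : ∀ x, φ (α x) = φ x) (hext : ExtremeIn (invariantStates α) φ) (n : ℕ)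
    (s : Fin n → Fin 2) : φ (M.cylinder n s) = 0 ∨ φ (M.cylinder n s) = 1 := by
  have := M.nontrivial
  set p := M.cylinder n s with hpdef
  have hp : IsStarProjection p := M.isStarProjection_cylinder n s
  have hαp : α p = p := hα.apply_cylinder n s
  have h0 := Complex.nonneg_iff.mp (map_nonneg_of_isStarProjection hst.1 hp)
  have h1 := hst.map_re_le_one hp
  have hre : φ (1 - p) = ((1 - (φ p).re : ℝ) : ℂ) := by
    rw [map_sub, hst.map_one]
    exact Complex.ext (by simp) (by simp [← h0.2])
  by_contra! hne
  have hr0 : (φ p).re ≠ 0 := fun h => hne.1 (Complex.ext h h0.2.symm)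
  have hr1 : (φ p).re ≠ 1 := fun h => hne.2 (Complex.ext h h0.2.symm)
  have hr1' : (φ (1 - p)).re ≠ 0 := by
    rw [hre, Complex.ofReal_re]
    exact sub_ne_zero.mpr hr1.symm
  have hinv {q : A} (hq : α q = q) (x : A) : compression φ q (α x) = compression φ q x := by
    rw [compression_apply, compression_apply, ← hφ (q * x * q), map_mul α, map_mul α, hq]
  have hdec : (φ : A → ℂ) = (φ p).re • ⇑(compression φ p) +
      (1 - (φ p).re) • ⇑(compression φ (1 - p)) := by
    funext x
    obtain ⟨e₁, e₂⟩ := hα.map_cylinder_mul_mul_one_sub hθ hφ n s x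
    rw [← hpdef] at e₁ e₂
    have e : x = p * x * p + p * x * (1 - p) + (1 - p) * x * p + (1 - p) * x * (1 - p) := by
      noncomm_ring
    have e' := congrArg φ e
    rw [map_add, map_add, map_add, e₁, e₂, add_zero, add_zero] at e'
    rw [e']
    simp only [Pi.add_apply, Pi.smul_apply, compression_apply, Complex.real_smul]
    rw [hre, Complex.ofReal_re, mul_inv_cancel_left₀ (by exact_mod_cast hr0),
      mul_inv_cancel_left₀ (by exact_mod_cast sub_ne_zero.mpr hr1.symm)]
  have heq := (hext.2 _ ⟨_, isState_compression hst.1 hp hr0, hinv hαp, rfl⟩ _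
    ⟨_, isState_compression hst.1 hp.one_sub hr1', hinv (by rw [map_sub, map_one, hαp]), rfl⟩
    (φ p).re (lt_of_le_of_ne h0.1 hr0.symm) (lt_of_le_of_ne h1 hr1) hdec).1
  have hp1 := congrFun heq p
  rw [compression_apply, hp.isIdempotentElem.eq, hp.isIdempotentElem.eq,
    show ((φ p).re : ℂ) = φ p from Complex.ext rfl h0.2, inv_mul_cancel₀ hne.1] at hp1
  exact hne.2 hp1.symm

lemma exists_isEvaluation_of_extremeIn {φ : A →L[ℂ] ℂ} (hst : IsState φ)
    (hφ : ∀ x, φ (α x) = φ x) (hext : ExtremeIn (invariantStates α) φ) :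
    ∃ ρ, M.IsEvaluation φ ρ :=
  exists_isEvaluation_of_map_cylinder hst
    (hα.map_cylinder_eq_zero_or_one_of_extremeIn hθ hst hφ hext)

lemma exists_isEvaluation_of_isPureState {φ : A →L[ℂ] ℂ} (hpure : IsPureState φ)
    (hφ : ∀ x, φ (α x) = φ x) : ∃ ρ, M.IsEvaluation φ ρ :=
  hα.exists_isEvaluation_of_extremeIn hθ hpure.1 hφ (hpure.extremeIn hφ)

/-- Invariant pure states, and their limits, take the values zero and one on the minimal diagonal
projections. -/
lemma closure_invariantPureStates_subset :
    closure (invariantPureStates α) ⊆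
      {f | ∀ n s, f (M.cylinder n s) = 0 ∨ f (M.cylinder n s) = 1} := by
  refine closure_minimal ?_ ?_
  · rintro _ ⟨φ, hpure, hφ, rfl⟩ n s
    obtain ⟨ρ, hρ⟩ := hα.exists_isEvaluation_of_isPureState hθ hpure hφ
    exact hρ.map_cylinder_eq_zero_or_one n s
  · simp only [Set.ofPred_forall]
    refine isClosed_iInter fun n => isClosed_iInter fun s => ?_
    exact (isClosed_eq (continuous_apply _) continuous_const).union
      (isClosed_eq (continuous_apply _) continuous_const)

lemma closure_invariantPureStates_inter_subset :
    closure (invariantPureStates α) ∩ invariantStates α ⊆ invariantPureStates α := by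
  rintro _ ⟨hcl, φ, hst, hφ, rfl⟩
  obtain ⟨ρ, hρ⟩ := exists_isEvaluation_of_map_cylinder hst
    (hα.closure_invariantPureStates_subset hθ hcl)
  exact ⟨φ, hρ.isPureState, hφ, rfl⟩

lemma not_invariantStates_subset_closure :
    ¬ invariantStates α ⊆ closure (invariantPureStates α) := by
  intro hsub
  have := M.nontrivial
  obtain ⟨φ, hφ⟩ := M.exists_isEvaluation fun _ => 0
  obtain ⟨ψ, hψ⟩ := M.exists_isEvaluation fun _ => 1
  have hmix : ⇑((1 / 2 : ℝ) • φ + (1 - 1 / 2 : ℝ) • ψ) ∈ invariantStates α :=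
    ⟨_, hφ.isState.convex hψ.isState (by norm_num) (by norm_num), fun x => by
      simp only [add_apply, smul_apply, hα.map_apply_of_isEvaluation hφ,
        hα.map_apply_of_isEvaluation hψ], rfl⟩
  have h := hα.closure_invariantPureStates_subset hθ (hsub hmix) 1 fun _ => 0
  have e₁ : φ (M.cylinder 1 fun _ => 0) = 1 := hφ.map_cylinder 1
  have e₂ : ψ (M.cylinder 1 fun _ => 0) = 0 := by
    rw [cylinder, hψ, Matrix.single_apply, if_neg]
    exact fun h => zero_ne_one (congrFun h.1 0)
  rw [add_apply, smul_apply, smul_apply, e₁, e₂] at h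
  norm_num at h

end IsProductAction
end UHF2Model

/-- **Example 2.6**: for the product-type action `α = ⊗ Ad diag(1, e^{2πiθ_n})` on the UHF
algebra `⊗ M₂`, with rationally independent irrational `θ_n`, the fixed point algebra is the
diagonal maximal abelian subalgebra, the extremal invariant states are exactly the pure product
`0–1` states, every extremal invariant state is pure, and the invariant pure states form a
weak*-closed, non-dense subset of the invariant states. -/
theorem uhf_product_action_invariant_pure_states_closed
    {A : Type*} [CStarAlgebra A] (M : UHF2Model A)
    (θ : ℕ → ℝ)
    (hθ : LinearIndependent ℚ (fun o : Option ℕ => Option.elim o (1 : ℝ) θ))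
    (α : A ≃⋆ₐ[ℂ] A)
    (hα : ∀ n x, α (M.j n x) = M.j n (diagUnitary θ n * x * star (diagUnitary θ n))) :
    -- the fixed point algebra is the diagonal subalgebra `⊗_{n=1}^∞ ℂ²`
    ({a : A | α a = a} =
      closure (⋃ n, (M.j n) '' {x : M2pow n | ∃ d, x = Matrix.diagonal d})) ∧
    -- the extremal invariant states are exactly the pure product `0–1` states
    (∀ f : A → ℂ,
      ExtremeIn {f : A → ℂ | ∃ φ : A →L[ℂ] ℂ, IsState φ ∧ (∀ x, φ (α x) = φ x) ∧ f = ⇑φ} f ↔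
      ∃ (ρ : ℕ → Fin 2) (φ : A →L[ℂ] ℂ), f = ⇑φ ∧ IsState φ ∧
        ∀ n (x : M2pow n), φ (M.j n x) = x (fun k => ρ (k : ℕ)) (fun k => ρ (k : ℕ))) ∧
    -- every extremal invariant state is pure
    (∀ φ : A →L[ℂ] ℂ, IsState φ → (∀ x, φ (α x) = φ x) →
      ExtremeIn {f : A → ℂ | ∃ ψ : A →L[ℂ] ℂ, IsState ψ ∧ (∀ x, ψ (α x) = ψ x) ∧ f = ⇑ψ} ⇑φ →
      IsPureState φ) ∧
    -- the invariant pure states are weak*-closed in the invariant states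
    (closure {f : A → ℂ | ∃ φ : A →L[ℂ] ℂ, IsPureState φ ∧ (∀ x, φ (α x) = φ x) ∧ f = ⇑φ} ∩
        {f : A → ℂ | ∃ φ : A →L[ℂ] ℂ, IsState φ ∧ (∀ x, φ (α x) = φ x) ∧ f = ⇑φ} ⊆
      {f : A → ℂ | ∃ φ : A →L[ℂ] ℂ, IsPureState φ ∧ (∀ x, φ (α x) = φ x) ∧ f = ⇑φ}) ∧
    -- and they are not weak*-dense in the invariant states
    ¬ ({f : A → ℂ | ∃ φ : A →L[ℂ] ℂ, IsState φ ∧ (∀ x, φ (α x) = φ x) ∧ f = ⇑φ} ⊆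
      closure {f : A → ℂ | ∃ φ : A →L[ℂ] ℂ, IsPureState φ ∧ (∀ x, φ (α x) = φ x) ∧ f = ⇑φ}) := by
  have hα' : M.IsProductAction θ α := hα
  refine ⟨hα'.fixedPoints_eq hθ, fun f => ⟨?_, ?_⟩, fun φ hst hφ hext => ?_,
    hα'.closure_invariantPureStates_inter_subset hθ, hα'.not_invariantStates_subset_closure hθ⟩
  · intro hext
    obtain ⟨φ, hst, hφ, rfl⟩ := hext.1
    obtain ⟨ρ, hρ⟩ := hα'.exists_isEvaluation_of_extremeIn hθ hst hφ hext
    exact ⟨ρ, φ, rfl, hst, hρ⟩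
  · rintro ⟨ρ, φ, rfl, -, hρ⟩
    have hev : M.IsEvaluation φ ρ := hρ
    exact hev.isPureState.extremeIn (hα'.map_apply_of_isEvaluation hev)
  · obtain ⟨ρ, hρ⟩ := hα'.exists_isEvaluation_of_extremeIn hθ hst hφ hext
    exact hρ.isPureState
end
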